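/- Let k be a field of characteristic 0, n ≥ 1 an integer, and let a = nl + r with l ≥ 0 and 0 ≤ r ≤ n−1. Assume either (i) l is even and 3r > 2n, in which case set m := n(l + 1 + l/2), or (ii) l is odd and 3r < n, in which case set m := n(l + (l−1)/2) + 3r. Then in the Fermat ring R = k[X,Y,Z]/(X^n+Y^n+Z^n) there exists a nonzero triple (g₁,g₂,g₃) ∈ R³ with each gᵢ homogeneous of degree m − a (or zero) such that g₁·X^a + g₂·Y^a + g₃·Z^a = 0 in R. (This nonzero section of Syz_C(X^a,Y^a,Z^a)(m) is the subsheaf realizing the Harder–Narasimhan filtration of the syzygy bundle in characteristic zero.) -/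

import Mathlib

/-!
Put `U = X^n`, `V = Y^n`, `W = Z^n = -(U + V)`. The syzygies over `R` come from syzygies of
`U^s, V^s, W^s` over the polynomial ring `k[U, V]`, with `s = 2d + 1` odd: triples of binary forms
of degree `d` form a space of dimension `3(d + 1) = 3d + 3`, while their combinations with
`U^s, V^s, W^s` lie in the space of binary forms of degree `3d + 1`, of dimension `3d + 2`. Hence
there is a nonzero relation `h₁ U^s + h₂ V^s + h₃ W^s = 0` (`exists_univariate_syzygy`, in
dehomogenized form, and `exists_syzygy_of_pow`).

* If `l = 2d` and `2n < 3r`, take `s = l + 1`; since `X^(n-r) X^a = U^s`, the triple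
  `(h₁ X^(n-r), h₂ Y^(n-r), h₃ Z^(n-r))` is a syzygy of `X^a, Y^a, Z^a`.
* If `l = 2d + 1` and `3r < n`, take `s = l`; since `(YZ)^r X^a = (XYZ)^r U^s`, the triple
  `(h₁ (YZ)^r, h₂ (XZ)^r, h₃ (XY)^r)` is a syzygy.

It remains nonzero in `R` because every entry has degree less than `n` in `Z`, and a nonzero
multiple of `X^n + Y^n + Z^n` has degree at least `n` in `Z` (`fmk_ne_zero`).
-/

open MvPolynomial

set_option synthInstance.maxHeartbeats 1000000
set_option maxHeartbeats 1000000

noncomputable section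

abbrev MvP (k : Type*) [Field k] : Type _ := MvPolynomial (Fin 3) k

/-- The quotient of `k[X,Y,Z]` by the principal ideal generated by `G`. -/
abbrev QuotG {k : Type*} [Field k] (G : MvP k) : Type _ := MvP k ⧸ Ideal.span {G}

def qmk {k : Type*} [Field k] (G : MvP k) : MvP k →+* QuotG G := Ideal.Quotient.mk _

/-- The Fermat polynomial `X^n + Y^n + Z^n`. -/
def fermatPoly (k : Type*) [Field k] (n : ℕ) : MvP k := X 0 ^ n + X 1 ^ n + X 2 ^ n

/-- The Fermat ring `k[X,Y,Z]/(X^n + Y^n + Z^n)`. -/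
abbrev FermatRing (k : Type*) [Field k] (n : ℕ) : Type _ := QuotG (fermatPoly k n)

def fmk (k : Type*) [Field k] (n : ℕ) : MvP k →+* FermatRing k n := qmk _

/-- `x` is the residue class of a homogeneous polynomial of degree `d`. -/
def IsHomog {k : Type*} [Field k] {G : MvP k} (x : QuotG G) (d : ℕ) : Prop :=
  ∃ P : MvP k, P.IsHomogeneous d ∧ qmk G P = x

/-- `x` is zero, or the residue class of a homogeneous polynomial of (integer) degree `d`. -/
def IsHomogZ {k : Type*} [Field k] {G : MvP k} (x : QuotG G) (d : ℤ) : Prop :=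
  x = 0 ∨ ∃ d' : ℕ, (d' : ℤ) = d ∧ IsHomog x d'

/-- The dimension count: the target space has dimension `3d + 2`, one less than the source. -/
lemma exists_univariate_syzygy (k : Type*) [Field k] (d : ℕ) :
    ∃ p : Fin 3 → Polynomial k, p ≠ 0 ∧ (∀ i, (p i).natDegree ≤ d) ∧
      p 0 * Polynomial.X ^ (2 * d + 1) + p 1 +
        p 2 * (-(Polynomial.X + 1)) ^ (2 * d + 1) = 0 := by
  classical
  let q : Fin 3 → Polynomial k :=
    ![Polynomial.X ^ (2 * d + 1), 1, (-(Polynomial.X + 1)) ^ (2 * d + 1)]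
  have hq : ∀ i, (q i).natDegree ≤ 2 * d + 1 := by
    intro i
    fin_cases i
    · simp [q]
    · simp [q]
    · refine Polynomial.natDegree_pow_le_of_le (m := 1) _ ?_ |>.trans (by simp)
      rw [Polynomial.natDegree_neg]
      compute_degree
  have hdeg : ∀ (e : ℕ) (f : Polynomial k),
      f ∈ Polynomial.degreeLT k (e + 1) ↔ f.natDegree ≤ e := by
    intro e f
    rw [Polynomial.mem_degreeLT, Polynomial.natDegree_le_iff_degree_le,
      Polynomial.degree_lt_iff_coeff_zero, Polynomial.degree_le_iff_coeff_zero]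
    constructor
    · intro h m hm
      exact h m (by exact_mod_cast hm)
    · intro h m hm
      exact h m (by exact_mod_cast hm)
  let L₀ : (Fin 3 → Polynomial.degreeLT k (d + 1)) →ₗ[k] Polynomial k :=
    ∑ i, (LinearMap.mulRight k (q i)) ∘ₗ (Submodule.subtype _) ∘ₗ (LinearMap.proj i)
  have hL₀ : ∀ v, L₀ v = ∑ i, (v i : Polynomial k) * q i := by
    intro v
    simp [L₀]
  let L : (Fin 3 → Polynomial.degreeLT k (d + 1)) →ₗ[k] Polynomial.degreeLT k (3 * d + 1 + 1) :=
    LinearMap.codRestrict _ L₀ (by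
      intro v
      rw [hL₀]
      refine Submodule.sum_mem _ fun i _ => ?_
      rw [hdeg]
      have h1 := (hdeg d _).1 (v i).2
      have h2 := hq i
      have h3 := Polynomial.natDegree_mul_le (p := (v i : Polynomial k)) (q := q i)
      omega)
  have hfin : ∀ e, Module.Finite k (Polynomial.degreeLT k e) := fun e =>
    Module.Finite.equiv (Polynomial.degreeLTEquiv k e).symm
  have hrank : ∀ e, Module.finrank k (Polynomial.degreeLT k e) = e := fun e => by
    rw [(Polynomial.degreeLTEquiv k e).finrank_eq, Module.finrank_fin_fun]
  have := hfin (d + 1)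
  have := hfin (3 * d + 1 + 1)
  have hker : LinearMap.ker L ≠ ⊥ := by
    apply LinearMap.ker_ne_bot_of_finrank_lt
    rw [Module.finrank_pi_fintype]
    simp only [hrank, Finset.sum_const, Finset.card_univ, Fintype.card_fin, smul_eq_mul]
    omega
  obtain ⟨v, hv, hv0⟩ := Submodule.exists_mem_ne_zero_of_ne_bot hker
  refine ⟨fun i => v i, ?_, fun i => (hdeg d _).1 (v i).2, ?_⟩
  · intro h
    apply hv0
    funext i
    exact Subtype.ext (congrFun h i)
  · have h1 : L₀ v = 0 := congrArg Subtype.val (LinearMap.mem_ker.1 hv)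
    rw [hL₀, Fin.sum_univ_three] at h1
    simpa [q] using h1

/-- The relation `h₁ U^s + h₂ V^s + h₃ (-(U + V))^s = 0` with `s = 2d + 1`, for binary forms `hᵢ`
of degree `d` evaluated at `U = X^n`, `V = Y^n`. -/
lemma exists_syzygy_of_pow (k : Type*) [Field k] (n d : ℕ) (hn : 1 ≤ n) :
    ∃ P : Fin 3 → MvP k, P ≠ 0 ∧ (∀ i, (P i).IsHomogeneous (n * d)) ∧
      (∀ i, (P i).degreeOf 2 = 0) ∧
      P 0 * (X 0 ^ n) ^ (2 * d + 1) + P 1 * (X 1 ^ n) ^ (2 * d + 1) +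
        P 2 * (-(X 0 ^ n + X 1 ^ n)) ^ (2 * d + 1) = 0 := by
  classical
  obtain ⟨p, hp0, hpd, hp⟩ := exists_univariate_syzygy k d
  have hinj : Function.Injective (Fin.castSucc : Fin 2 → Fin 3) := Fin.castSucc_injective 2
  let φ : MvPolynomial (Fin 2) k →ₐ[k] MvP k := (rename Fin.castSucc).comp (expand n)
  have hφ0 : φ (X 0) = X 0 ^ n := by simp [φ]
  have hφ1 : φ (X 1) = X 1 ^ n := by simp [φ]
  have hφ : Function.Injective φ :=
    (rename_injective _ hinj).comp (expand_injective (by omega))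
  refine ⟨fun i => φ ((p i).homogenize d), ?_, ?_, ?_, ?_⟩
  · intro h
    apply hp0
    funext i
    refine Polynomial.eq_zero_of_homogenize_eq_zero (hpd i) (hφ ?_)
    rw [map_zero]
    exact congrFun h i
  · intro i
    apply IsHomogeneous.rename_isHomogeneous
    exact (Polynomial.isHomogeneous_homogenize (p i)).aeval _
      (fun j => isHomogeneous_X_pow j n)
  · intro i
    by_contra h
    have h2 : (2 : Fin 3) ∈ (φ ((p i).homogenize d)).vars := by
      rw [vars_def, Multiset.mem_toFinset]
      rw [degreeOf_def] at h
      exact Multiset.count_ne_zero.1 h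
    obtain ⟨j, -, hj⟩ := mem_vars_rename _ _ h2
    fin_cases j <;> simp at hj
  · have hlin : (-(Polynomial.X + 1) : Polynomial k).natDegree ≤ 1 := by
      rw [Polynomial.natDegree_neg]
      compute_degree
    -- `-(X + 1)` is homogenized in degree `1`, and its powers accordingly
    have hpow : ∀ s, ((-(Polynomial.X + 1) : Polynomial k) ^ s).homogenize s =
        (-(X 0 + X 1)) ^ s := by
      intro s
      have := Polynomial.homogenize_finsetProd (s := Finset.range s)
        (p := fun _ => (-(Polynomial.X + 1) : Polynomial k)) (n := fun _ => 1)
        (fun _ _ => hlin)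
      simpa using this
    have h := congrArg (fun f => φ (Polynomial.homogenize f (d + (2 * d + 1)))) hp
    have h1 : (p 1).homogenize (d + (2 * d + 1)) =
        (p 1).homogenize d * X 1 ^ (2 * d + 1) := by
      have := Polynomial.homogenize_mul (p 1) 1 (hpd 1)
        (n := 2 * d + 1) (by simp)
      simpa using this
    simp only [Polynomial.homogenize_add] at h
    rw [Polynomial.homogenize_mul _ _ (hpd 0) (by simp), h1,
      Polynomial.homogenize_mul _ _ (hpd 2)
        ((Polynomial.natDegree_pow_le_of_le _ hlin).trans (by simp)), hpow] at h
    simpa [hφ0, hφ1] using h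

/-- A nonzero polynomial of degree less than `n` in `Z` is not a multiple of `X^n + Y^n + Z^n`. -/
lemma fmk_ne_zero {k : Type*} [Field k] {n : ℕ} {P : MvP k} (hP : P ≠ 0)
    (hd : P.degreeOf 2 < n) : fmk k n P ≠ 0 := by
  classical
  intro h
  have hmem : P ∈ Ideal.span {fermatPoly k n} := Ideal.Quotient.eq_zero_iff_mem.1 h
  obtain ⟨Q, rfl⟩ := Ideal.mem_span_singleton.1 hmem
  rw [degreeOf_mul_eq (left_ne_zero_of_mul hP) (right_ne_zero_of_mul hP)] at hd
  have hn : n ≠ 0 := by omega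
  have hc : Finsupp.single (2 : Fin 3) n ∈ (fermatPoly k n).support := by
    rw [mem_support_iff, fermatPoly]
    simp [coeff_X_pow, Finsupp.single_eq_single_iff, hn]
  have := monomial_le_degreeOf 2 hc
  simp at this
  omega

/-- Multipliers `Mᵢ` with `Mᵢ xᵢ^a = T (xᵢ^n)^s` for a common `T` turn a syzygy of the
`(xᵢ^n)^s` into a syzygy of the `xᵢ^a`. -/
lemma exists_syzygy_of_multipliers {k : Type*} [Field k] (n a m d e : ℕ) (hn : 1 ≤ n)
    (M : Fin 3 → MvP k) (T : MvP k) (hM0 : ∀ i, M i ≠ 0)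
    (hMe : ∀ i, (M i).IsHomogeneous e) (hMd : ∀ i, (M i).degreeOf 2 < n)
    (hMT : ∀ i, M i * X i ^ a = T * (X i ^ n) ^ (2 * d + 1)) (hm : m = a + (e + n * d)) :
    ∃ g : Fin 3 → FermatRing k n, g ≠ 0 ∧
      (∀ i, IsHomogZ (g i) ((m : ℤ) - a)) ∧
      g 0 * fmk k n (X 0 ^ a) + g 1 * fmk k n (X 1 ^ a) + g 2 * fmk k n (X 2 ^ a) = 0 := by
  obtain ⟨P, hP0, hPh, hPd, hP⟩ := exists_syzygy_of_pow k n d hn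
  refine ⟨fun i => fmk k n (M i * P i), ?_, ?_, ?_⟩
  · obtain ⟨i, hi⟩ := Function.ne_iff.1 hP0
    intro h
    refine fmk_ne_zero (mul_ne_zero (hM0 i) hi) ?_ (congrFun h i)
    rw [degreeOf_mul_eq (hM0 i) hi, hPd i]
    simpa using hMd i
  · intro i
    refine Or.inr ⟨e + n * d, ?_, M i * P i, (hMe i).mul (hPh i), rfl⟩
    rw [hm]
    push_cast
    ring
  · have hF : fmk k n (fermatPoly k n) = 0 :=
      Ideal.Quotient.eq_zero_iff_mem.2 (Ideal.subset_span rfl)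
    have hZ : fmk k n (X 2 ^ n) = fmk k n (-(X 0 ^ n + X 1 ^ n)) := by
      have hsub : (X 2 ^ n - -(X 0 ^ n + X 1 ^ n) : MvP k) = fermatPoly k n := by
        rw [fermatPoly]
        ring
      rw [← sub_eq_zero, ← map_sub, hsub, hF]
    have h := congrArg (fmk k n) hP
    rw [map_zero, map_add, map_mul _ (P 2), map_pow, ← hZ, ← map_pow, ← map_mul, ← map_add] at h
    simp only [← map_mul, ← map_add]
    have hsum : M 0 * P 0 * X 0 ^ a + M 1 * P 1 * X 1 ^ a + M 2 * P 2 * X 2 ^ a =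
        T * (P 0 * (X 0 ^ n) ^ (2 * d + 1) + P 1 * (X 1 ^ n) ^ (2 * d + 1) +
          P 2 * (X 2 ^ n) ^ (2 * d + 1)) := by
      linear_combination P 0 * hMT 0 + P 1 * hMT 1 + P 2 * hMT 2
    rw [hsum, map_mul, h, mul_zero]

/-- Characteristic zero: if `a = nl + r` with (`l` even and `3r > 2n`,
`m = n(l+1+l/2)`) or (`l` odd and `3r < n`, `m = n(l+(l-1)/2)+3r`), then there is a nonzero
syzygy for `X^a, Y^a, Z^a` in the Fermat ring whose entries are homogeneous of degree
`m - a` (or zero); this section realizes the HN-filtration of the syzygy bundle. -/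
theorem stmt10 {k : Type*} [Field k] [CharZero k] (n a l r m : ℕ) (hn : 1 ≤ n)
    (ha : 1 ≤ a) (hal : a = n * l + r) (hr : r ≤ n - 1)
    (hm : (Even l ∧ 2 * n < 3 * r ∧ m = n * (l + 1 + l / 2)) ∨
      (Odd l ∧ 3 * r < n ∧ m = n * (l + (l - 1) / 2) + 3 * r)) :
    ∃ g : Fin 3 → FermatRing k n, g ≠ 0 ∧
      (∀ i, IsHomogZ (g i) ((m : ℤ) - a)) ∧
      g 0 * fmk k n (X 0 ^ a) + g 1 * fmk k n (X 1 ^ a) + g 2 * fmk k n (X 2 ^ a) = 0 := by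
  obtain ⟨hl, hr3, hm⟩ | ⟨hl, hr3, hm⟩ := hm
  · obtain ⟨d, rfl⟩ := hl
    have hd : (d + d) / 2 = d := by omega
    obtain ⟨t, rfl⟩ : ∃ t, n = r + t := ⟨n - r, by omega⟩
    refine exists_syzygy_of_multipliers (r + t) a m d t hn (fun i => X i ^ t) 1
      (fun i => pow_ne_zero _ (X_ne_zero i)) (fun i => isHomogeneous_X_pow i t) (fun i => ?_)
      (fun i => ?_) ?_
    · rw [degreeOf_pow_eq _ _ _ (X_ne_zero i), degreeOf_X]
      split_ifs <;> omega
    · rw [hal, ← pow_add, one_mul, ← pow_mul]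
      congr 1
      ring
    · rw [hm, hal, hd]
      ring
  · obtain ⟨d, rfl⟩ := hl
    have hd : (2 * d + 1 - 1) / 2 = d := by omega
    have hX : ∀ i : Fin 3, (X i ^ r : MvP k) ≠ 0 := fun i => pow_ne_zero _ (X_ne_zero i)
    -- the multiplier of `x_i` is the product of the `r`-th powers of the other two variables
    refine exists_syzygy_of_multipliers n a m d (r + r) hn
      (fun i => X (i + 1) ^ r * X (i + 2) ^ r) (X 0 ^ r * X 1 ^ r * X 2 ^ r)
      (fun i => mul_ne_zero (hX _) (hX _))
      (fun i => (isHomogeneous_X_pow _ r).mul (isHomogeneous_X_pow _ r)) (fun i => ?_)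
      (fun i => ?_) ?_
    · rw [degreeOf_mul_eq (hX _) (hX _), degreeOf_pow_eq _ _ _ (X_ne_zero _),
        degreeOf_pow_eq _ _ _ (X_ne_zero _), degreeOf_X, degreeOf_X]
      split_ifs <;> omega
    · rw [hal]
      fin_cases i
      · change X 1 ^ r * X 2 ^ r * X 0 ^ _ = _ * (X 0 ^ n) ^ _
        ring
      · change X 2 ^ r * X 0 ^ r * X 1 ^ _ = _ * (X 1 ^ n) ^ _
        ring
      · change X 0 ^ r * X 1 ^ r * X 2 ^ _ = _ * (X 2 ^ n) ^ _
        ring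
    · rw [hm, hal, hd]
      ring
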